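/- Let (u, p) be a smooth solution of the incompressible Navier–Stokes equations without external force on ℝ³ × [0,∞), set v = curl u, and fix i ∈ {1,2,3}. At every point (x,t) with t > 0 at which Δvᵢ(x,t) < 0, one has ∂ₜvᵢ(x,t) ≤ 2·max(‖v(x,t)‖², ‖u(x,t)‖²) + 2·max(‖∇vᵢ(x,t)‖², ‖∇uᵢ(x,t)‖²), where ∇f = (∂₁f, ∂₂f, ∂₃f) is the spatial gradient and ‖·‖ is the Euclidean norm on ℝ³. -/

import Mathlib

/-!
Taking the curl of the momentum equation removes the pressure and, since `div u = 0`, gives the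
vorticity equation `∂ₜv + (u·∇)v - (v·∇)u = νΔv` (`vorticity_equation`). Where `Δvᵢ < 0` the
viscous term is negative, so `∂ₜvᵢ ≤ v·∇uᵢ - u·∇vᵢ`, and Young's inequality
`ab ≤ (a² + b²)/2` in each coordinate bounds the right-hand side.

Time and space derivatives are all treated as directional derivatives `dirD w` of functions on
space-time `ℝ³ × ℝ`, restricted to the open set `t > 0`, where everything is smooth and
directional derivatives commute (`dirD_comm`).
-/

open Real MeasureTheory

noncomputable section

abbrev Vec3 := Fin 3 → ℝ

/-- Spatial partial derivative in the `j`-th coordinate direction. -/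
def pd (j : Fin 3) (f : Vec3 → ℝ) (x : Vec3) : ℝ :=
  fderiv ℝ f x (Pi.single j 1)

/-- Divergence of a vector field on ℝ³. -/
def vdiv (u : Vec3 → Vec3) (x : Vec3) : ℝ := ∑ j, pd j (fun y => u y j) x

/-- Curl of a vector field on ℝ³. -/
def vcurl (u : Vec3 → Vec3) : Vec3 → Vec3 := fun x =>
  ![pd 1 (fun y => u y 2) x - pd 2 (fun y => u y 1) x,
    pd 2 (fun y => u y 0) x - pd 0 (fun y => u y 2) x,
    pd 0 (fun y => u y 1) x - pd 1 (fun y => u y 0) x]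

/-- Laplacian of a scalar function on ℝ³. -/
def lap (f : Vec3 → ℝ) (x : Vec3) : ℝ := ∑ j, pd j (fun y => pd j f y) x

/-- Convective term `(u·∇)u`. -/
def conv (u : Vec3 → Vec3) : Vec3 → Vec3 := fun x i => ∑ j, u x j * pd j (fun y => u y i) x

/-- Spatial gradient of a scalar function. -/
def grad (f : Vec3 → ℝ) (x : Vec3) : Vec3 := fun j => pd j f x

/-- Euclidean norm on `Fin 3 → ℝ`. -/
def enorm3 (w : Vec3) : ℝ := Real.sqrt (∑ j, w j ^ 2)

/-- `(u, p)` is a smooth solution of the incompressible Navier–Stokes equations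
without external force on ℝ³ × [0,∞). -/
def IsNSSolution (ν ρ : ℝ) (u : Vec3 → ℝ → Vec3) (p : Vec3 → ℝ → ℝ) : Prop :=
  ContDiffOn ℝ (⊤ : ℕ∞) (fun q : Vec3 × ℝ => u q.1 q.2) (Set.univ ×ˢ Set.Ici 0) ∧
  ContDiffOn ℝ (⊤ : ℕ∞) (fun q : Vec3 × ℝ => p q.1 q.2) (Set.univ ×ˢ Set.Ici 0) ∧
  (∀ x : Vec3, ∀ t ≥ (0:ℝ), ∀ i : Fin 3,
    deriv (fun s => u x s i) t + conv (fun y => u y t) x i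
      - ν * lap (fun y => u y t i) x = -(1/ρ) * pd i (fun y => p y t) x) ∧
  (∀ x : Vec3, ∀ t ≥ (0:ℝ), vdiv (fun y => u y t) x = 0)


/-- The open part `t > 0` of space-time. -/
def posTime : Set (Vec3 × ℝ) := {q | 0 < q.2}

/-- Directional derivative of a space-time function along `w`. -/
def dirD (w : Vec3 × ℝ) (f : Vec3 × ℝ → ℝ) (q : Vec3 × ℝ) : ℝ := fderiv ℝ f q w

/-- The `j`-th spatial unit vector in space-time. -/
def spaceDir (j : Fin 3) : Vec3 × ℝ := (Pi.single j 1, 0)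

/-- The unit vector in the time direction. -/
def timeDir : Vec3 × ℝ := (0, 1)

/-- Smoothness on `t > 0`. -/
def SmoothPos (f : Vec3 × ℝ → ℝ) : Prop := ContDiffOn ℝ (⊤ : ℕ∞) f posTime

lemma isOpen_posTime : IsOpen posTime := isOpen_lt continuous_const continuous_snd

lemma SmoothPos.contDiffAt {f : Vec3 × ℝ → ℝ} (hf : SmoothPos f) {q : Vec3 × ℝ}
    (hq : q ∈ posTime) : ContDiffAt ℝ (⊤ : ℕ∞) f q :=
  ContDiffOn.contDiffAt hf (isOpen_posTime.mem_nhds hq)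

lemma SmoothPos.diffAt {f : Vec3 × ℝ → ℝ} (hf : SmoothPos f) {q : Vec3 × ℝ}
    (hq : q ∈ posTime) : DifferentiableAt ℝ f q :=
  (hf.contDiffAt hq).differentiableAt (by simp)

lemma SmoothPos.dirD {f : Vec3 × ℝ → ℝ} (hf : SmoothPos f) (w : Vec3 × ℝ) :
    SmoothPos (dirD w f) := by
  have h : ContDiffOn ℝ (⊤ : ℕ∞) (fderiv ℝ f) posTime :=
    ContDiffOn.fderiv_of_isOpen hf isOpen_posTime (by simp)
  exact h.clm_apply contDiffOn_const

lemma SmoothPos.sub {f g : Vec3 × ℝ → ℝ} (hf : SmoothPos f) (hg : SmoothPos g) :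
    SmoothPos (fun q => f q - g q) := ContDiffOn.sub hf hg

lemma SmoothPos.add {f g : Vec3 × ℝ → ℝ} (hf : SmoothPos f) (hg : SmoothPos g) :
    SmoothPos (fun q => f q + g q) := ContDiffOn.add hf hg

lemma SmoothPos.mul {f g : Vec3 × ℝ → ℝ} (hf : SmoothPos f) (hg : SmoothPos g) :
    SmoothPos (fun q => f q * g q) := ContDiffOn.mul hf hg

lemma SmoothPos.const_mul {f : Vec3 × ℝ → ℝ} (c : ℝ) (hf : SmoothPos f) :
    SmoothPos (fun q => c * f q) := ContDiffOn.mul contDiffOn_const hf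

lemma SmoothPos.sum {f : Fin 3 → Vec3 × ℝ → ℝ} (hf : ∀ j, SmoothPos (f j)) :
    SmoothPos (fun q => ∑ j, f j q) := ContDiffOn.sum fun j _ => hf j

section Calculus

variable {f g : Vec3 × ℝ → ℝ} {q : Vec3 × ℝ}

lemma dirD_congr (h : ∀ q ∈ posTime, f q = g q) (w : Vec3 × ℝ) (hq : q ∈ posTime) :
    dirD w f q = dirD w g q := by
  have : f =ᶠ[nhds q] g := by
    filter_upwards [isOpen_posTime.mem_nhds hq] with z hz using h z hz
  simp only [dirD, this.fderiv_eq]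

lemma dirD_add (hf : SmoothPos f) (hg : SmoothPos g) (w : Vec3 × ℝ) (hq : q ∈ posTime) :
    dirD w (fun z => f z + g z) q = dirD w f q + dirD w g q := by
  simp only [dirD]
  rw [fderiv_fun_add (hf.diffAt hq) (hg.diffAt hq)]; rfl

lemma dirD_sub (hf : SmoothPos f) (hg : SmoothPos g) (w : Vec3 × ℝ) (hq : q ∈ posTime) :
    dirD w (fun z => f z - g z) q = dirD w f q - dirD w g q := by
  simp only [dirD]
  rw [fderiv_fun_sub (hf.diffAt hq) (hg.diffAt hq)]; rfl

lemma dirD_mul (hf : SmoothPos f) (hg : SmoothPos g) (w : Vec3 × ℝ) (hq : q ∈ posTime) :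
    dirD w (fun z => f z * g z) q = dirD w f q * g q + f q * dirD w g q := by
  simp only [dirD]
  rw [fderiv_fun_mul (hf.diffAt hq) (hg.diffAt hq)]
  simp only [_root_.add_apply, _root_.smul_apply, smul_eq_mul]
  ring

lemma dirD_const_mul (c : ℝ) (hf : SmoothPos f) (w : Vec3 × ℝ) (hq : q ∈ posTime) :
    dirD w (fun z => c * f z) q = c * dirD w f q := by
  simp only [dirD]
  rw [fderiv_const_mul (hf.diffAt hq)]; rfl

lemma dirD_sum {f : Fin 3 → Vec3 × ℝ → ℝ} (hf : ∀ j, SmoothPos (f j)) (w : Vec3 × ℝ)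
    (hq : q ∈ posTime) : dirD w (fun z => ∑ j, f j z) q = ∑ j, dirD w (f j) q := by
  simp only [dirD]
  rw [fderiv_fun_sum fun j _ => (hf j).diffAt hq]
  simp

lemma dirD_comm (hf : SmoothPos f) (w w' : Vec3 × ℝ) (hq : q ∈ posTime) :
    dirD w (dirD w' f) q = dirD w' (dirD w f) q := by
  have hsymm : IsSymmSndFDerivAt ℝ f q :=
    (hf.contDiffAt hq).isSymmSndFDerivAt (by
      rw [minSmoothness_of_isRCLikeNormedField]; exact WithTop.coe_le_coe.2 le_top)
  have hd : DifferentiableAt ℝ (fderiv ℝ f) q :=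
    ((hf.contDiffAt hq).fderiv_right (m := 1) (WithTop.coe_le_coe.2 le_top)).differentiableAt
      (by simp)
  have key : ∀ a b : Vec3 × ℝ, dirD a (dirD b f) q = fderiv ℝ (fderiv ℝ f) q a b := by
    intro a b
    change fderiv ℝ (fun z => fderiv ℝ f z b) q a = _
    rw [fderiv_clm_apply hd (differentiableAt_const b)]
    simp
  rw [key, key, hsymm.eq]

lemma pd_slice (hf : SmoothPos f) (j : Fin 3) (x : Vec3) {t : ℝ} (ht : 0 < t) :
    pd j (fun y => f (y, t)) x = dirD (spaceDir j) f (x, t) := by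
  have h1 : HasFDerivAt (fun y : Vec3 => (y, t)) (ContinuousLinearMap.inl ℝ Vec3 ℝ) x :=
    hasFDerivAt_prodMk_left x t
  have h2 := (hf.diffAt (q := (x, t)) ht).hasFDerivAt.comp x h1
  have h3 : fderiv ℝ (fun y => f (y, t)) x = _ := h2.fderiv
  simp only [pd, dirD, spaceDir, h3]
  simp

lemma deriv_slice (hf : SmoothPos f) (x : Vec3) {t : ℝ} (ht : 0 < t) :
    deriv (fun s => f (x, s)) t = dirD timeDir f (x, t) := by
  have h1 : HasFDerivAt (fun s : ℝ => (x, s)) (ContinuousLinearMap.inr ℝ Vec3 ℝ) t :=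
    hasFDerivAt_prodMk_right x t
  have h2 := (hf.diffAt (q := (x, t)) ht).hasFDerivAt.comp t h1
  have h3 : deriv (fun s => f (x, s)) t = _ := h2.hasDerivAt.deriv
  rw [h3]
  simp [dirD, timeDir]

lemma lap_slice (hf : SmoothPos f) (x : Vec3) {t : ℝ} (ht : 0 < t) :
    lap (fun y => f (y, t)) x
      = ∑ j, dirD (spaceDir j) (dirD (spaceDir j) f) (x, t) := by
  simp only [lap]
  refine Finset.sum_congr rfl fun j _ => ?_
  simp only [pd_slice hf j _ ht]
  exact pd_slice (hf.dirD _) j x ht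

end Calculus

/-- The `i`-th vorticity component of `U` on space-time; indices are cyclic (addition in
`Fin 3`). -/
def vort (U : Fin 3 → Vec3 × ℝ → ℝ) (i : Fin 3) (q : Vec3 × ℝ) : ℝ :=
  dirD (spaceDir (i + 1)) (U (i + 2)) q - dirD (spaceDir (i + 2)) (U (i + 1)) q

lemma vort_smooth {U : Fin 3 → Vec3 × ℝ → ℝ} (hU : ∀ i, SmoothPos (U i)) (i : Fin 3) :
    SmoothPos (vort U i) := ((hU _).dirD _).sub ((hU _).dirD _)

lemma vcurl_slice {U : Fin 3 → Vec3 × ℝ → ℝ} (hU : ∀ i, SmoothPos (U i)) (i : Fin 3)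
    (x : Vec3) {t : ℝ} (ht : 0 < t) :
    vcurl (fun y j => U j (y, t)) x i = vort U i (x, t) := by
  simp only [vcurl, vort, pd_slice (hU _) _ _ ht]
  fin_cases i <;> rfl

section Vorticity

variable {U : Fin 3 → Vec3 × ℝ → ℝ} {P : Vec3 × ℝ → ℝ} {ν c : ℝ}

/-- The momentum equation for component `i` differentiated in direction `k`, with `∂ₖ` moved
next to `U i`. -/
lemma momentum_deriv (hU : ∀ i, SmoothPos (U i)) (hP : SmoothPos P)
    (hm : ∀ i, ∀ q ∈ posTime, dirD timeDir (U i) q + ∑ j, U j q * dirD (spaceDir j) (U i) q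
      - ν * ∑ j, dirD (spaceDir j) (dirD (spaceDir j) (U i)) q = c * dirD (spaceDir i) P q)
    (k i : Fin 3) {q : Vec3 × ℝ} (hq : q ∈ posTime) :
    dirD timeDir (dirD (spaceDir k) (U i)) q
      + ∑ j, (dirD (spaceDir k) (U j) q * dirD (spaceDir j) (U i) q
          + U j q * dirD (spaceDir j) (dirD (spaceDir k) (U i)) q)
      - ν * ∑ j, dirD (spaceDir j) (dirD (spaceDir j) (dirD (spaceDir k) (U i))) q
      = c * dirD (spaceDir k) (dirD (spaceDir i) P) q := by
  have h := dirD_congr (hm i) (spaceDir k) hq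
  have s1 : ∀ j, SmoothPos (fun q => U j q * dirD (spaceDir j) (U i) q) := fun j =>
    (hU j).mul ((hU i).dirD _)
  have s2 : ∀ j, SmoothPos (dirD (spaceDir j) (dirD (spaceDir j) (U i))) := fun j =>
    ((hU i).dirD _).dirD _
  rw [dirD_sub (((hU i).dirD _).add (SmoothPos.sum s1)) ((SmoothPos.sum s2).const_mul ν) _ hq,
    dirD_add ((hU i).dirD _) (SmoothPos.sum s1) _ hq, dirD_sum s1 _ hq,
    dirD_const_mul ν (SmoothPos.sum s2) _ hq, dirD_sum s2 _ hq,
    dirD_const_mul c (hP.dirD _) _ hq, dirD_comm (hU i) _ _ hq] at h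
  rw [← h]
  congr 2
  · refine Finset.sum_congr rfl fun j _ => ?_
    rw [dirD_mul (hU j) ((hU i).dirD _) _ hq, dirD_comm (hU i) (spaceDir j) (spaceDir k) hq]
  · refine Finset.sum_congr rfl fun j _ => ?_
    rw [dirD_comm ((hU i).dirD _) (spaceDir k) (spaceDir j) hq]
    exact dirD_congr (fun z hz => dirD_comm (hU i) _ _ hz) _ hq

/-- The vorticity equation: the curl of the momentum equation, with the pressure cancelled by
symmetry of its second derivatives. -/
lemma vorticity_equation (hU : ∀ i, SmoothPos (U i)) (hP : SmoothPos P)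
    (hm : ∀ i, ∀ q ∈ posTime, dirD timeDir (U i) q + ∑ j, U j q * dirD (spaceDir j) (U i) q
      - ν * ∑ j, dirD (spaceDir j) (dirD (spaceDir j) (U i)) q = c * dirD (spaceDir i) P q)
    (hdiv : ∀ q ∈ posTime, ∑ j, dirD (spaceDir j) (U j) q = 0)
    (i : Fin 3) {q : Vec3 × ℝ} (hq : q ∈ posTime) :
    dirD timeDir (vort U i) q
      = ∑ j, (vort U j q * dirD (spaceDir j) (U i) q - U j q * dirD (spaceDir j) (vort U i) q)
        + ν * ∑ j, dirD (spaceDir j) (dirD (spaceDir j) (vort U i)) q := by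
  have hD : ∀ w, ∀ z ∈ posTime, dirD w (vort U i) z
      = dirD w (dirD (spaceDir (i + 1)) (U (i + 2))) z
        - dirD w (dirD (spaceDir (i + 2)) (U (i + 1))) z := fun w z hz =>
    dirD_sub ((hU _).dirD _) ((hU _).dirD _) w hz
  have hDD : ∀ w, dirD w (dirD w (vort U i)) q
      = dirD w (dirD w (dirD (spaceDir (i + 1)) (U (i + 2)))) q
        - dirD w (dirD w (dirD (spaceDir (i + 2)) (U (i + 1)))) q := fun w => by
    rw [dirD_congr (hD w) w hq,
      dirD_sub (((hU _).dirD _).dirD _) (((hU _).dirD _).dirD _) w hq]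
  have e1 := momentum_deriv hU hP hm (i + 1) (i + 2) hq
  have e2 := momentum_deriv hU hP hm (i + 2) (i + 1) hq
  have hp := dirD_comm hP (spaceDir (i + 1)) (spaceDir (i + 2)) hq
  have hd := hdiv q hq
  simp only [hDD, hD _ q hq]
  rw [hp] at e1
  simp only [Fin.sum_univ_three, vort] at e1 e2 hd ⊢
  -- With `(k, l) = (i + 1, i + 2)`, the products `∑ⱼ (∂ₖuⱼ ∂ⱼuₗ - ∂ₗuⱼ ∂ⱼuₖ)` left over from the
  -- convective terms equal `(div u) vᵢ - v·∇uᵢ`.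
  fin_cases i <;> simp at e1 e2 ⊢
  · linear_combination e1 - e2 - (dirD (spaceDir 1) (U 2) q - dirD (spaceDir 2) (U 1) q) * hd
  · linear_combination e1 - e2 - (dirD (spaceDir 2) (U 0) q - dirD (spaceDir 0) (U 2) q) * hd
  · linear_combination e1 - e2 - (dirD (spaceDir 0) (U 1) q - dirD (spaceDir 1) (U 0) q) * hd

end Vorticity

lemma enorm3_sq (w : Vec3) : enorm3 w ^ 2 = ∑ j, w j ^ 2 :=
  Real.sq_sqrt (Finset.sum_nonneg fun _ _ => sq_nonneg _)

/-- at points where `Δvᵢ < 0`, the vorticity component satisfies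
`∂ₜvᵢ ≤ 2 max(‖v‖², ‖u‖²) + 2 max(‖∇vᵢ‖², ‖∇uᵢ‖²)`. -/
theorem vorticity_max_bound_neg_laplacian (ν ρ : ℝ) (hν : 0 < ν) (hρ : 0 < ρ)
    (u : Vec3 → ℝ → Vec3) (p : Vec3 → ℝ → ℝ)
    (hns : IsNSSolution ν ρ u p) (i : Fin 3) :
    ∀ x : Vec3, ∀ t : ℝ, 0 < t →
      lap (fun y => vcurl (fun z => u z t) y i) x < 0 →
      deriv (fun s => vcurl (fun y => u y s) x i) t
        ≤ 2 * max (enorm3 (vcurl (fun y => u y t) x) ^ 2) (enorm3 (u x t) ^ 2)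
          + 2 * max (enorm3 (grad (fun y => vcurl (fun z => u z t) y i) x) ^ 2)
                    (enorm3 (grad (fun y => u y t i) x) ^ 2) := by
  obtain ⟨hu, hp, hm, hdiv⟩ := hns
  intro x t ht hlap
  set U : Fin 3 → Vec3 × ℝ → ℝ := fun j q => u q.1 q.2 j with hUdef
  have hsub : posTime ⊆ Set.univ ×ˢ Set.Ici (0 : ℝ) := fun q (hq : 0 < q.2) => ⟨trivial, hq.le⟩
  have hU : ∀ j, SmoothPos (U j) := fun j => contDiffOn_pi.1 (hu.mono hsub) j
  have hP : SmoothPos (fun q => p q.1 q.2) := hp.mono hsub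
  have hdiv' : ∀ q ∈ posTime, ∑ j, dirD (spaceDir j) (U j) q = 0 := by
    rintro ⟨y, s⟩ hs
    rw [← hdiv y s (le_of_lt hs)]
    exact Finset.sum_congr rfl fun j _ => (pd_slice (hU j) j y hs).symm
  have hm' : ∀ i, ∀ q ∈ posTime,
      dirD timeDir (U i) q + ∑ j, U j q * dirD (spaceDir j) (U i) q
      - ν * ∑ j, dirD (spaceDir j) (dirD (spaceDir j) (U i)) q
      = -(1 / ρ) * dirD (spaceDir i) (fun q => p q.1 q.2) q := by
    rintro i ⟨y, s⟩ hs
    rw [← pd_slice hP i y hs, ← lap_slice (hU i) y hs, ← deriv_slice (hU i) y hs]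
    simp only [← pd_slice (hU i) _ y hs]
    exact hm y s (le_of_lt hs) i
  have hcurl : ∀ s, 0 < s → ∀ y j, vcurl (fun z => u z s) y j = vort U j (y, s) :=
    fun s hs y j => vcurl_slice hU j y hs
  have hV := vort_smooth hU i
  have htime : deriv (fun s => vcurl (fun y => u y s) x i) t = dirD timeDir (vort U i) (x, t) := by
    rw [← deriv_slice hV x ht]
    apply Filter.EventuallyEq.deriv_eq
    filter_upwards [lt_mem_nhds ht] with s hs using hcurl s hs x i
  have hgu : ∀ j, pd j (fun y => u y t i) x = dirD (spaceDir j) (U i) (x, t) := fun j =>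
    pd_slice (hU i) j x ht
  simp only [hcurl t ht] at hlap ⊢
  rw [lap_slice hV x ht] at hlap
  rw [htime, vorticity_equation hU hP hm' hdiv' i (q := (x, t)) ht]
  simp only [enorm3_sq, grad, hcurl t ht, hgu, pd_slice hV _ x ht]
  have hvisc := mul_neg_of_pos_of_neg hν hlap
  -- Young's inequality in each coordinate.
  have young : ∑ j, (vort U j (x, t) * dirD (spaceDir j) (U i) (x, t)
        - U j (x, t) * dirD (spaceDir j) (vort U i) (x, t))
      ≤ ∑ j, (vort U j (x, t) ^ 2 + dirD (spaceDir j) (U i) (x, t) ^ 2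
        + u x t j ^ 2 + dirD (spaceDir j) (vort U i) (x, t) ^ 2) / 2 := by
    refine Finset.sum_le_sum fun j _ => ?_
    change _ - u x t j * _ ≤ _
    nlinarith [sq_nonneg (vort U j (x, t) - dirD (spaceDir j) (U i) (x, t)),
      sq_nonneg (u x t j + dirD (spaceDir j) (vort U i) (x, t))]
  rw [← Finset.sum_div] at young
  simp only [Finset.sum_add_distrib] at young
  have n1 : 0 ≤ ∑ j, u x t j ^ 2 := Finset.sum_nonneg fun _ _ => sq_nonneg _
  have n2 : 0 ≤ ∑ j, dirD (spaceDir j) (U i) (x, t) ^ 2 :=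
    Finset.sum_nonneg fun _ _ => sq_nonneg _
  have m1 := le_max_left (∑ j, vort U j (x, t) ^ 2) (∑ j, u x t j ^ 2)
  have m2 := le_max_right (∑ j, vort U j (x, t) ^ 2) (∑ j, u x t j ^ 2)
  have m3 := le_max_left (∑ j, dirD (spaceDir j) (vort U i) (x, t) ^ 2)
    (∑ j, dirD (spaceDir j) (U i) (x, t) ^ 2)
  have m4 := le_max_right (∑ j, dirD (spaceDir j) (vort U i) (x, t) ^ 2)
    (∑ j, dirD (spaceDir j) (U i) (x, t) ^ 2)
  linarith

end
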